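/- arXiv:2602.02698 — 6 statements merged into one kernel-verified Lean document; each statement's English description precedes it below -/
import Mathlib

section
/- Let N be a natural number, let S be a subset of the set of binary strings of length N, and let S̄ = {0,1}^N \ S be its complement within {0,1}^N. Then for every cut n with 0 ≤ n ≤ N, the Schmidt ranks of S and S̄ across the cut n differ by at most one: rank(Ψ_n(S̄)) ≤ rank(Ψ_n(S)) + 1 and rank(Ψ_n(S)) ≤ rank(Ψ_n(S̄)) + 1. -/
/-!
The indicator matrices of a set and of its complement add up to the all-ones matrix, which is an
outer product. Each is therefore an outer product minus the other, and the rank is subadditive.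
-/

open Classical

/-- The reshaped amplitude matrix of a set `S` of binary strings of length `N`
across the cut `n`: the `(u,v)` entry is `1` if the concatenation `u·v` lies in `S`
and `0` otherwise. -/
noncomputable def Psi (N n : ℕ) (hn : n ≤ N) (S : Set (Fin N → Fin 2)) :
    Matrix (Fin n → Fin 2) (Fin (N - n) → Fin 2) ℂ :=
  Matrix.of fun u v =>
    if (Fin.append u v ∘ Fin.cast (by omega : N = n + (N - n))) ∈ S then (1 : ℂ) else 0

section MatrixRank

variable {m n R : Type*} [Fintype n] [CommRing R]

theorem matrix_rank_neg (A : Matrix m n R) : (-A).rank = A.rank := by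
  have mulVecLin_neg : (-A).mulVecLin = -A.mulVecLin :=
    LinearMap.ext fun x => Matrix.neg_mulVec x A
  rw [Matrix.rank, Matrix.rank, mulVecLin_neg, LinearMap.range_neg]

variable [IsDomain R]

theorem matrix_rank_add_le (A B : Matrix m n R) : (A + B).rank ≤ A.rank + B.rank := by
  refine Module.finrank_le_of_rank_le ?_
  calc Module.rank R (A + B).mulVecLin.range
      ≤ Module.rank R ↥(A.mulVecLin.range ⊔ B.mulVecLin.range) :=
        Submodule.rank_mono (Matrix.mulVecLin_add A B ▸ LinearMap.range_add_le _ _)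
    _ ≤ Module.rank R A.mulVecLin.range + Module.rank R B.mulVecLin.range :=
        Submodule.rank_add_le_rank_add_rank _ _
    _ = ↑(A.rank + B.rank) := by
        simp only [Matrix.rank, Nat.cast_add, Module.finrank_eq_rank]

theorem matrix_rank_sub_le (A B : Matrix m n R) : (A - B).rank ≤ A.rank + B.rank := by
  simpa only [sub_eq_add_neg, matrix_rank_neg] using matrix_rank_add_le A (-B)

theorem matrix_rank_le_rank_add_one_of_add_eq_vecMulVec {A B : Matrix m n R} {w : m → R}
    {v : n → R} (h : A + B = Matrix.vecMulVec w v) : A.rank ≤ B.rank + 1 :=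
  calc A.rank = (Matrix.vecMulVec w v - B).rank := by rw [← h, add_sub_cancel_right]
    _ ≤ (Matrix.vecMulVec w v).rank + B.rank := matrix_rank_sub_le _ _
    _ ≤ 1 + B.rank := by gcongr; exact Matrix.rank_vecMulVec_le w v
    _ = B.rank + 1 := add_comm _ _

end MatrixRank

section IndicatorMatrix

variable {m n : Type*} (R : Type*)

/-- The `0`-`1` matrix over `R` of a relation between row and column indices, the relation being
encoded as a set of pairs. It abstracts the amplitude matrix `Psi` from strings and cuts. -/
noncomputable def indicatorMatrix [Zero R] [One R] (S : Set (m × n)) : Matrix m n R :=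
  Matrix.of fun i j => S.indicator 1 (i, j)

theorem indicatorMatrix_add_compl [NonAssocSemiring R] (S : Set (m × n)) :
    indicatorMatrix R S + indicatorMatrix R Sᶜ = Matrix.vecMulVec 1 1 := by
  ext i j
  calc S.indicator (1 : m × n → R) (i, j) + Sᶜ.indicator 1 (i, j)
      = 1 := congrFun (Set.indicator_self_add_compl S 1) (i, j)
    _ = Matrix.vecMulVec 1 1 i j := (mul_one 1).symm

theorem complement_schmidt_rank_diff_le_one_general [Fintype n] [CommRing R] [IsDomain R]
    (S : Set (m × n)) :
    (indicatorMatrix R Sᶜ).rank ≤ (indicatorMatrix R S).rank + 1 ∧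
    (indicatorMatrix R S).rank ≤ (indicatorMatrix R Sᶜ).rank + 1 :=
  have add_compl := indicatorMatrix_add_compl R S
  ⟨matrix_rank_le_rank_add_one_of_add_eq_vecMulVec ((add_comm _ _).trans add_compl),
    matrix_rank_le_rank_add_one_of_add_eq_vecMulVec add_compl⟩

end IndicatorMatrix

/-- The pairs `(u, v)` of a prefix of length `n` and a suffix of length `N - n` whose concatenation
lies in `S`, so that cutting `S` at `n` becomes a relation between prefixes and suffixes. -/
def cutPairs (N n : ℕ) (hn : n ≤ N) (S : Set (Fin N → Fin 2)) :
    Set ((Fin n → Fin 2) × (Fin (N - n) → Fin 2)) :=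
  (fun p => Fin.append p.1 p.2 ∘ Fin.cast (Nat.add_sub_cancel' hn).symm) ⁻¹' S

theorem Psi_eq_indicatorMatrix (N n : ℕ) (hn : n ≤ N) (S : Set (Fin N → Fin 2)) :
    Psi N n hn S = indicatorMatrix ℂ (cutPairs N n hn S) := by
  ext u v
  simp only [Psi, indicatorMatrix, cutPairs, Matrix.of_apply, Set.indicator_apply,
    Set.mem_preimage, Pi.one_apply]

theorem cutPairs_compl (N n : ℕ) (hn : n ≤ N) (S : Set (Fin N → Fin 2)) :
    cutPairs N n hn Sᶜ = (cutPairs N n hn S)ᶜ :=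
  Set.preimage_compl

/-- The Schmidt ranks of `S` and its complement within `{0,1}^N` differ by at most one
across every cut. -/
theorem complement_schmidt_rank_diff_le_one (N : ℕ) (S : Set (Fin N → Fin 2))
    (n : ℕ) (hn : n ≤ N) :
    (Psi N n hn Sᶜ).rank ≤ (Psi N n hn S).rank + 1 ∧
    (Psi N n hn S).rank ≤ (Psi N n hn Sᶜ).rank + 1 := by
  simpa only [Psi_eq_indicatorMatrix, cutPairs_compl] using
    complement_schmidt_rank_diff_le_one_general ℂ (cutPairs N n hn S)
end

section
/- Let M be a deterministic finite automaton over a finite alphabet α with finite state type σ, accepting the language L = M.accepts. Then for every N ∈ ℕ and every cut n with 0 ≤ n ≤ N, the rank over ℂ of the matrix Ψ_n with rows indexed by words u of length n and columns indexed by words v of length N−n, whose (u,v) entry is 1 if the concatenation u·v ∈ L and 0 otherwise, is at most the cardinality of σ. -/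
/-! The row of a prefix `x` in the Hankel matrix of a language is the indicator function of the left
quotient by `x`, so the matrix has at most as many distinct rows as the language has left quotients.
If a DFA accepts the language, each left quotient is the language accepted from some state. The
matrix `PsiDFA` is a block of the Hankel matrix. -/

open Classical

/-- The reshaped amplitude matrix of the language accepted by the DFA `M`, for words of
length `N` across the cut `n`: the `(u,v)` entry is `1` if the concatenation `u·v` is
accepted by `M` and `0` otherwise. -/
noncomputable def PsiDFA {α σ : Type*} (M : DFA α σ) (n m : ℕ) :
    Matrix (Fin n → α) (Fin m → α) ℂ :=
  Matrix.of fun u v => if (List.ofFn u ++ List.ofFn v) ∈ M.accepts then (1 : ℂ) else 0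

/-- The Hankel matrix of a language, with entries in `R`. It is indexed by all words, so that its
rank is an `eRank` and the matrices of the individual cuts are submatrices of it. -/
noncomputable def hankelMatrix {α : Type*} (R : Type*) [Zero R] [One R] (L : Language α) :
    Matrix (List α) (List α) R :=
  Matrix.of fun x y => if x ++ y ∈ L then 1 else 0

theorem PsiDFA_eq_submatrix_hankelMatrix {α σ : Type*} (M : DFA α σ) (n m : ℕ) :
    PsiDFA M n m = (hankelMatrix ℂ M.accepts).submatrix List.ofFn List.ofFn :=
  rfl

theorem eRank_hankelMatrix_le_encard_range_leftQuotient {α R : Type*} [Semiring R]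
    [StrongRankCondition R] (L : Language α) :
    (hankelMatrix R L).eRank ≤ (Set.range L.leftQuotient).encard := by
  let quotientIndicator : Matrix (Set.range L.leftQuotient) (List α) R :=
    Matrix.of fun K y => if y ∈ K.1 then 1 else 0
  have factor : hankelMatrix R L =
      quotientIndicator.submatrix (Set.rangeFactorization L.leftQuotient) id := rfl
  calc (hankelMatrix R L).eRank
      ≤ quotientIndicator.eRank := factor ▸ quotientIndicator.eRank_submatrix_le _ _
    _ ≤ (Set.range L.leftQuotient).encard := quotientIndicator.eRank_le_card_height

theorem encard_range_leftQuotient_accepts_le {α σ : Type*} (M : DFA α σ) :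
    (Set.range M.accepts.leftQuotient).encard ≤ ENat.card σ := by
  rw [Language.leftQuotient_accepts]
  calc (Set.range (M.acceptsFrom ∘ M.eval)).encard
      ≤ (Set.range M.acceptsFrom).encard :=
        Set.encard_le_encard (Set.range_comp_subset_range M.eval M.acceptsFrom)
    _ ≤ ENat.card σ := by
        rw [← Set.image_univ, ← Set.encard_univ]
        exact Set.encard_image_le _ _

theorem rank_PsiDFA_le_card_states_general {α σ R : Type*} [Semiring R] [StrongRankCondition R]
    (M : DFA α σ) : (hankelMatrix R M.accepts).eRank ≤ ENat.card σ :=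
  (eRank_hankelMatrix_le_encard_range_leftQuotient M.accepts).trans
    (encard_range_leftQuotient_accepts_le M)

/-- The Schmidt rank of a regular language state across any cut is at most the number of
states of a DFA accepting the language. -/
theorem rank_PsiDFA_le_card_states {α σ : Type*} [Fintype α] [Fintype σ]
    (M : DFA α σ) (N n : ℕ) (hn : n ≤ N) :
    (PsiDFA M n (N - n)).rank ≤ Fintype.card σ := by
  rw [PsiDFA_eq_submatrix_hankelMatrix, ← Matrix.eRank_toNat_eq_rank]
  refine ENat.toNat_le_of_le_natCast ?_
  calc ((hankelMatrix ℂ M.accepts).submatrix List.ofFn List.ofFn).eRank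
      ≤ (hankelMatrix ℂ M.accepts).eRank := Matrix.eRank_submatrix_le _ _ _
    _ ≤ ENat.card σ := rank_PsiDFA_le_card_states_general M
    _ = Fintype.card σ := ENat.card_eq_coe_fintype_card
end

section
/- Let N, k, n be natural numbers with n ≤ N, and let S_k ⊆ {0,1}^N be the set of binary strings of length N with Hamming weight exactly k. Then the Schmidt rank of S_k across the cut n satisfies rank(Ψ_n(S_k)) ≤ k + 1. -/
open Classical

/-- The set of binary strings of length `N` with Hamming weight exactly `k`. -/
def hammingSet (N k : ℕ) : Set (Fin N → Fin 2) :=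
  {x | (Finset.univ.filter fun i => x i = 1).card = k}

/-!
The weight of a concatenation is the sum of the weights. Hence the row of `Psi` at a prefix `u`
is the indicator function of the suffixes of weight `k - |u|` when `|u| ≤ k`, and zero otherwise.
So the row space lies in the span of the indicators of the `k + 1` weights `0, …, k`.
-/

theorem rank_le_card_of_forall_row_mem_span {m n ι K : Type*} [Finite m] [Fintype n] [Fintype ι]
    [Field K] {A : Matrix m n K} {b : ι → n → K}
    (h : ∀ i, A.row i ∈ Submodule.span K (Set.range b)) : A.rank ≤ Fintype.card ι :=
  calc A.rank = Module.finrank K (Submodule.span K (Set.range A.row)) :=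
        A.rank_eq_finrank_span_row
    _ ≤ Module.finrank K (Submodule.span K (Set.range b)) :=
        Submodule.finrank_mono (Submodule.span_le.mpr (Set.range_subset_iff.mpr h))
    _ ≤ Fintype.card ι := finrank_range_le_card b

theorem hammingNorm_comp_equiv {ι κ α : Type*} [Fintype ι] [Fintype κ] [Zero α] [DecidableEq α]
    (x : κ → α) (e : ι ≃ κ) : hammingNorm (x ∘ e) = hammingNorm x :=
  Finset.card_equiv e fun i => by simp only [Finset.mem_filter_univ, Function.comp_apply]

theorem hammingNorm_append {m n : ℕ} {α : Type*} [Zero α] [DecidableEq α]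
    (u : Fin m → α) (v : Fin n → α) :
    hammingNorm (Fin.append u v) = hammingNorm u + hammingNorm v := by
  simp only [hammingNorm, Finset.card_filter, Fin.sum_univ_add, Fin.append_left, Fin.append_right]

theorem mem_hammingSet {N k : ℕ} {x : Fin N → Fin 2} :
    x ∈ hammingSet N k ↔ hammingNorm x = k := by
  have ne_zero_iff (b : Fin 2) : b ≠ 0 ↔ b = 1 := by lia
  simp only [hammingSet, Set.mem_ofPred_eq, hammingNorm, ne_zero_iff]

theorem append_comp_cast_mem_hammingSet {N m n k : ℕ} (h : N = m + n)
    (u : Fin m → Fin 2) (v : Fin n → Fin 2) :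
    Fin.append u v ∘ Fin.cast h ∈ hammingSet N k ↔ hammingNorm u + hammingNorm v = k := by
  rw [mem_hammingSet, ← hammingNorm_append]
  exact Eq.congr_left (hammingNorm_comp_equiv (Fin.append u v) (finCongr h))

theorem Psi_hammingSet_row_of_le {N k n : ℕ} (hn : n ≤ N) {u : Fin n → Fin 2}
    (hu : hammingNorm u ≤ k) :
    (Psi N n hn (hammingSet N k)).row u =
      (hammingSet (N - n) (k - hammingNorm u)).indicator 1 := by
  ext v
  have weight_iff : hammingNorm u + hammingNorm v = k ↔ hammingNorm v = k - hammingNorm u := by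
    omega
  simp only [Matrix.row, Psi, Matrix.of_apply, append_comp_cast_mem_hammingSet, weight_iff,
    Set.indicator_apply, Pi.one_apply]
  simp only [mem_hammingSet]

theorem Psi_hammingSet_row_of_lt {N k n : ℕ} (hn : n ≤ N) {u : Fin n → Fin 2}
    (hu : k < hammingNorm u) :
    (Psi N n hn (hammingSet N k)).row u = 0 := by
  ext v
  have weight_ne : hammingNorm u + hammingNorm v ≠ k := by omega
  simp only [Matrix.row, Psi, Matrix.of_apply, append_comp_cast_mem_hammingSet, weight_ne,
    if_false, Pi.zero_apply]

theorem Psi_hammingSet_row_mem_span {N n : ℕ} (k : ℕ) (hn : n ≤ N) (u : Fin n → Fin 2) :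
    (Psi N n hn (hammingSet N k)).row u ∈ Submodule.span ℂ
      (Set.range fun j : Fin (k + 1) => (hammingSet (N - n) j).indicator 1) := by
  rcases le_or_gt (hammingNorm u) k with hle | hlt
  · rw [Psi_hammingSet_row_of_le hn hle]
    exact Submodule.subset_span ⟨⟨k - hammingNorm u, by omega⟩, rfl⟩
  · rw [Psi_hammingSet_row_of_lt hn hlt]
    exact Submodule.zero_mem _

/-- The Schmidt rank of the Dicke-`k` (fixed Hamming weight `k`) state across any cut `n`
is at most `k + 1`. -/
theorem rank_Psi_hammingSet_le (N k n : ℕ) (hn : n ≤ N) :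
    (Psi N n hn (hammingSet N k)).rank ≤ k + 1 := by
  calc (Psi N n hn (hammingSet N k)).rank ≤ Fintype.card (Fin (k + 1)) :=
        rank_le_card_of_forall_row_mem_span (Psi_hammingSet_row_mem_span k hn)
    _ = k + 1 := Fintype.card_fin (k + 1)
end

section
/- Let N, k, n be natural numbers with n ≤ N, let S_k ⊆ {0,1}^N be the set of binary strings of length N with Hamming weight exactly k, and let S̄_k = {0,1}^N \ S_k be its complement within {0,1}^N. Then the Schmidt rank of S̄_k across the cut n satisfies rank(Ψ_n(S̄_k)) ≤ k + 2. -/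
/-!
The Hamming weight is additive under concatenation, so for a set determined by the weights of its
members the matrix is of Hankel type: its `(u, v)` entry is a function of `wt u + wt v`. If this
function is constant from `K` on, then `wt u` may be replaced by `min (wt u) K`, which leaves at
most `K + 1` distinct rows. For the complement of weight `k` one can take `K = k + 1`.
-/

open Classical

theorem rank_hankel_le {m n R : Type*} [Fintype n] [CommSemiring R] [StrongRankCondition R]
    {g : ℕ → R} {K : ℕ} (hg : ∀ i ≥ K, g i = g K) (a : m → ℕ) (b : n → ℕ) :
    (Matrix.of fun i j => g (a i + b j)).rank ≤ K + 1 := by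
  let rows : Matrix (Fin (K + 1)) n R := Matrix.of fun t j => g (t.val + b j)
  have g_min_add (s t : ℕ) : g (min s K + t) = g (s + t) := by
    rcases le_total s K with hs | hs
    · rw [min_eq_left hs]
    · rw [min_eq_right hs, hg (K + t) (by omega), hg (s + t) (by omega)]
  have factorization : (Matrix.of fun i j => g (a i + b j)) =
      rows.submatrix (fun i => Fin.clamp (a i) K) id := by
    ext i j
    exact (g_min_add (a i) (b j)).symm
  calc
    (Matrix.of fun i j => g (a i + b j)).rank ≤ rows.rank := by
      rw [factorization]
      exact rows.rank_submatrix_le _ _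
    _ ≤ Fintype.card (Fin (K + 1)) := rows.rank_le_card_height
    _ = K + 1 := Fintype.card_fin _

theorem hammingSet_eq_preimage_hammingNorm (N k : ℕ) : hammingSet N k = hammingNorm ⁻¹' {k} := by
  ext x
  have eq_one_iff_ne_zero (i : Fin N) : x i = 1 ↔ x i ≠ 0 := by omega
  simp only [hammingSet, hammingNorm, Set.mem_ofPred_eq, Set.mem_preimage, Set.mem_singleton_iff,
    eq_one_iff_ne_zero]

theorem Psi_preimage_hammingNorm {N n : ℕ} (hn : n ≤ N) (A : Set ℕ) :
    Psi N n hn (hammingNorm ⁻¹' A) =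
      Matrix.of fun u v => A.indicator 1 (hammingNorm u + hammingNorm v) := by
  ext u v
  have weight_add : hammingNorm (Fin.append u v ∘ Fin.cast (by omega : N = n + (N - n))) =
      hammingNorm u + hammingNorm v :=
    (hammingNorm_comp_equiv _ (finCongr (by omega))).trans (hammingNorm_append u v)
  simp only [Psi, Matrix.of_apply, Set.mem_preimage, weight_add, Set.indicator_apply, Pi.one_apply]

theorem rank_Psi_compl_hammingSet_le_general {N n K : ℕ} (hn : n ≤ N) {A : Set ℕ}
    (hA : ∀ i ≥ K, i ∈ A ↔ K ∈ A) : (Psi N n hn (hammingNorm ⁻¹' A)).rank ≤ K + 1 := by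
  rw [Psi_preimage_hammingNorm]
  refine rank_hankel_le (fun i hi => ?_) hammingNorm hammingNorm
  simp only [Set.indicator_apply, hA i hi, Pi.one_apply]

/-- The Schmidt rank of the complement of the Dicke-`k` state across any cut `n`
is at most `k + 2`. -/
theorem rank_Psi_compl_hammingSet_le (N k n : ℕ) (hn : n ≤ N) :
    (Psi N n hn (hammingSet N k)ᶜ).rank ≤ k + 2 := by
  rw [hammingSet_eq_preimage_hammingNorm, ← Set.preimage_compl]
  exact rank_Psi_compl_hammingSet_le_general hn fun _ hi =>
    iff_of_true (Nat.ne_of_gt hi) k.succ_ne_self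
end

section
/- Let Σ be a finite alphabet, N ∈ ℕ, and ψ : Σ^N → ℂ a complex amplitude function on words of length N. Fix cuts a, b with 0 ≤ a ≤ b ≤ N, and let χ_a and χ_b be the ranks of the reshaped matrices of ψ across cuts a and b respectively. Then the matrix M with rows indexed by pairs (u, w) ∈ Σ^a × Σ^{N−b} and columns indexed by v ∈ Σ^{b−a}, defined by M((u,w), v) = ψ(u·v·w), has rank at most χ_a · χ_b. -/
/-!
The row of `M` at `(u, w)` is the vector `v ↦ ψ(u·v·w)`. For fixed `w` it depends linearly on the
row of `u` in the reshaping across `a`, because `v ↦ v·w` selects columns of that matrix; for fixed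
`u` it depends linearly on the column of `w` in the reshaping across `b`. Choose `χ_a` prefixes and
`χ_b` suffixes whose rows, resp. columns, span. Expanding first the prefix and then the suffix shows
that the `χ_a * χ_b` rows of `M` at pairs of chosen words span its row space.
-/

/-- The reshaped matrix of an amplitude function `ψ` on words of length `N` across a cut
`c ≤ N`: the `(x, y)` entry is `ψ (x·y)`. -/
def reshape {Γ : Type*} (N c : ℕ) (hc : c ≤ N) (ψ : (Fin N → Γ) → ℂ) :
    Matrix (Fin c → Γ) (Fin (N - c) → Γ) ℂ :=
  Matrix.of fun x y => ψ (Fin.append x y ∘ Fin.cast (by omega : N = c + (N - c)))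

section Span

variable {K U W E F G : Type*} [DivisionRing K] [AddCommGroup E] [Module K E]
  [AddCommGroup F] [Module K F] [AddCommGroup G] [Module K G]

lemma exists_fin_finrank_span_range_comp_eq (a : U → E)
    [FiniteDimensional K (Submodule.span K (Set.range a))] :
    ∃ s : Fin (Module.finrank K (Submodule.span K (Set.range a))) → U,
      Submodule.span K (Set.range (a ∘ s)) = Submodule.span K (Set.range a) := by
  obtain ⟨f, hf, hspan, -⟩ := Submodule.exists_fun_fin_finrank_span_eq K (Set.range a)
  choose s hs using hf
  exact ⟨s, by rwa [show a ∘ s = f from funext hs]⟩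

lemma map_mem_span_range_comp {ι : Type*} (φ : E →ₗ[K] G) {a : U → E} {s : ι → U}
    (hs : Submodule.span K (Set.range (a ∘ s)) = Submodule.span K (Set.range a)) (u : U) :
    φ (a u) ∈ Submodule.span K (Set.range fun i => φ (a (s i))) := by
  have hu : a u ∈ Submodule.span K (Set.range (a ∘ s)) :=
    hs ▸ Submodule.subset_span (Set.mem_range_self u)
  have hmap := Submodule.mem_map_of_mem (f := φ) hu
  rwa [Submodule.map_span, ← Set.range_comp] at hmap

lemma finrank_span_range_le_mul {x : U × W → G} {a : U → E} {b : W → F}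
    [FiniteDimensional K (Submodule.span K (Set.range a))]
    [FiniteDimensional K (Submodule.span K (Set.range b))]
    (φ : W → E →ₗ[K] G) (η : U → F →ₗ[K] G)
    (hφ : ∀ u w, x (u, w) = φ w (a u)) (hη : ∀ u w, x (u, w) = η u (b w)) :
    Module.finrank K (Submodule.span K (Set.range x)) ≤
      Module.finrank K (Submodule.span K (Set.range a)) *
        Module.finrank K (Submodule.span K (Set.range b)) := by
  obtain ⟨s, hs⟩ := exists_fin_finrank_span_range_comp_eq (K := K) a
  obtain ⟨t, ht⟩ := exists_fin_finrank_span_range_comp_eq (K := K) b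
  let S := Submodule.span K (Set.range (x ∘ Prod.map s t))
  have mem_of_left_chosen (i) (w : W) : x (s i, w) ∈ S := by
    have hw := map_mem_span_range_comp (η (s i)) ht w
    simp only [← hη] at hw
    have hsub : (Set.range fun j => x (s i, t j)) ⊆ Set.range (x ∘ Prod.map s t) :=
      Set.range_subset_iff.2 fun j => ⟨(i, j), rfl⟩
    exact Submodule.span_mono hsub hw
  have mem_of_pair (u : U) (w : W) : x (u, w) ∈ S := by
    have hu := map_mem_span_range_comp (φ w) hs u
    simp only [← hφ] at hu
    exact Submodule.span_le.2 (Set.range_subset_iff.2 fun i => mem_of_left_chosen i w) hu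
  have hx : Submodule.span K (Set.range x) ≤ S :=
    Submodule.span_le.2 (Set.range_subset_iff.2 fun p => mem_of_pair p.1 p.2)
  have : FiniteDimensional K S := FiniteDimensional.span_of_finite K (Set.finite_range _)
  calc Module.finrank K (Submodule.span K (Set.range x))
      ≤ Module.finrank K S := Submodule.finrank_mono hx
    _ ≤ Fintype.card (Fin _ × Fin _) := finrank_range_le_card _
    _ = Module.finrank K (Submodule.span K (Set.range a)) *
          Module.finrank K (Submodule.span K (Set.range b)) := by
        simp only [Fintype.card_prod, Fintype.card_fin]

end Span

lemma rank_le_rank_mul_rank_of_apply_eq {K U V W X Y : Type*} [Field K] [Finite U] [Fintype V]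
    [Fintype W] [Fintype X] {M : Matrix (U × W) V K} {A : Matrix U X K} {B : Matrix Y W K}
    (g : W → V → X) (h : U → V → Y) (hA : ∀ u w v, M (u, w) v = A u (g w v))
    (hB : ∀ u w v, M (u, w) v = B (h u v) w) :
    M.rank ≤ A.rank * B.rank := by
  rw [M.rank_eq_finrank_span_row, A.rank_eq_finrank_span_row, B.rank_eq_finrank_span_cols]
  have : FiniteDimensional K (Submodule.span K (Set.range B.col)) :=
    FiniteDimensional.span_of_finite K (Set.finite_range _)
  exact finrank_span_range_le_mul (fun w => LinearMap.funLeft K K (g w))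
    (fun u => LinearMap.funLeft K K (h u)) (fun u w => funext (hA u w)) fun u w => funext (hB u w)

section Words

variable {Γ : Type*} {N k p q r : ℕ}

lemma append_append_comp_cast_eq_append_suffix (hk : k = q + r) (hN : N = p + q + r)
    (u : Fin p → Γ) (v : Fin q → Γ) (w : Fin r → Γ) :
    Fin.append (Fin.append u v) w ∘ Fin.cast hN =
      Fin.append u (Fin.append v w ∘ Fin.cast hk) ∘ Fin.cast (by omega : N = p + k) := by
  subst hk hN
  exact Fin.append_assoc u v w

lemma append_append_comp_cast_eq_append_prefix (hk : k = p + q) (hN : N = p + q + r)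
    (u : Fin p → Γ) (v : Fin q → Γ) (w : Fin r → Γ) :
    Fin.append (Fin.append u v) w ∘ Fin.cast hN =
      Fin.append (Fin.append u v ∘ Fin.cast hk) w ∘ Fin.cast (by omega : N = k + r) := by
  subst hk hN
  rfl

lemma eq_add_sub_add_sub {a b : ℕ} (hab : a ≤ b) (hb : b ≤ N) :
    N = a + (b - a) + (N - b) := by
  omega

end Words

theorem rank_middle_block_le_mul_general {K Γ : Type*} [Field K] [Fintype Γ] (N a b : ℕ)
    (hab : a ≤ b) (hb : b ≤ N) (ψ : (Fin N → Γ) → K) :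
    (Matrix.of fun (p : (Fin a → Γ) × (Fin (N - b) → Γ)) (v : Fin (b - a) → Γ) =>
        ψ (Fin.append (Fin.append p.1 v) p.2 ∘ Fin.cast (eq_add_sub_add_sub hab hb))).rank ≤
      (Matrix.of fun (x : Fin a → Γ) (y : Fin (N - a) → Γ) =>
        ψ (Fin.append x y ∘ Fin.cast (Nat.add_sub_of_le (hab.trans hb)).symm)).rank *
      (Matrix.of fun (x : Fin b → Γ) (y : Fin (N - b) → Γ) =>
        ψ (Fin.append x y ∘ Fin.cast (Nat.add_sub_of_le hb).symm)).rank :=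
  have hsuffix : N - a = (b - a) + (N - b) := by omega
  have hprefix : b = a + (b - a) := by omega
  rank_le_rank_mul_rank_of_apply_eq
    (fun w v => Fin.append v w ∘ Fin.cast hsuffix)
    (fun u v => Fin.append u v ∘ Fin.cast hprefix)
    (fun u w v => congrArg ψ (append_append_comp_cast_eq_append_suffix hsuffix _ u v w))
    (fun u w v => congrArg ψ (append_append_comp_cast_eq_append_prefix hprefix _ u v w))

/-- The rank of the reshaping of `ψ` along the bipartition of the sites into the middle
block `{a+1, …, b}` versus its complement is at most `χ_a · χ_b`. -/
theorem rank_middle_block_le_mul {Γ : Type*} [Fintype Γ] (N a b : ℕ)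
    (hab : a ≤ b) (hb : b ≤ N) (ψ : (Fin N → Γ) → ℂ) :
    (Matrix.of fun (p : (Fin a → Γ) × (Fin (N - b) → Γ)) (v : Fin (b - a) → Γ) =>
        ψ (Fin.append (Fin.append p.1 v) p.2 ∘
          Fin.cast (by omega : N = a + (b - a) + (N - b)))).rank ≤
      (reshape N a (hab.trans hb) ψ).rank * (reshape N b hb ψ).rank :=
  rank_middle_block_le_mul_general N a b hab hb ψ
end

section
/- Let Σ be a finite alphabet, N ∈ ℕ with N ≥ 1, and ψ : Σ^N → ℂ an amplitude function. Let χ be the maximum over all cuts c ∈ {0,…,N} of the rank of the reshaped matrix of ψ across cut c, and assume χ ≥ 1. Then there exist, for each site i ∈ Fin N and each letter s ∈ Σ, a complex matrix A_i^s of size χ×χ, together with vectors l, r ∈ ℂ^χ, such that for every word x = (x₁,…,x_N) ∈ Σ^N one has ψ(x) = lᵀ · (A_1^{x₁} · A_2^{x₂} · ⋯ · A_N^{x_N}) · r. (That is, ψ admits a matrix product state representation whose bond dimension equals its maximal Schmidt rank.) -/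
/-!
The tensors are built from right to left. Across a cut with `m` letters to its right, the rows of
`ψ` are functions on words of length `m` and span a space `W m` generated by `χ` functions. Fixing
the first letter of a function in `W (m + 1)` gives a function in `W m`, since the row of a prefix
`p` becomes the row of the prefix `p s`. So if `b` lies in `W (m + 1)` and `g` generates `W m`, then
`b i (s y) = ∑ j, A s i j * g j y` for some matrices `A s`: these are the tensors of the site where
the letter `s` stands, and iterating down to `W 0`, whose elements are constants, writes `b i x` as
an entry of a product of matrices applied to a vector. Finally `ψ`, the row of the empty prefix, is
a combination of generators of `W N`, whose coefficients are the left boundary vector.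
-/

open scoped Matrix

lemma exists_fin_span_range_eq_of_spanRank_le {R M : Type*} [Semiring R] [AddCommMonoid M]
    [Module R M] {p : Submodule R M} {n : ℕ} (hp : p.spanRank ≤ n) :
    ∃ b : Fin n → M, Submodule.span R (Set.range b) = p := by
  obtain ⟨s, hs, rfl⟩ := p.exists_span_set_card_eq_spanRank
  obtain ⟨e⟩ : Nonempty (s ↪ Fin n) := by
    rw [← Cardinal.lift_mk_le']
    simpa [hs] using hp
  refine ⟨Function.extend e Subtype.val 0, ?_⟩
  have h_zero : Submodule.span R ((0 : Fin n → M) '' (Set.range e)ᶜ) = ⊥ := by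
    rw [Submodule.span_eq_bot]
    rintro _ ⟨_, _, rfl⟩
    rfl
  rw [Set.range_extend e.injective, Submodule.span_union, h_zero, sup_bot_eq, Subtype.range_coe]

section RowSpace

variable {R Γ : Type*} [Semiring R] {N c m : ℕ} (ψ : (Fin N → Γ) → R)

/-- The row space of `ψ` across the cut after `c` letters: the span of the functions
`y ↦ ψ (x·y)`, where `x` has length `c`. The length `m` of `y` is a parameter of its own, tied to
`N` by `c + m = N`, so that moving the cut by one letter involves no truncated subtraction. -/
def rowSpace (h : c + m = N) : Submodule R ((Fin m → Γ) → R) :=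
  Submodule.span R (Set.range fun (x : Fin c → Γ) y => ψ (Fin.append x y ∘ Fin.cast h.symm))

lemma self_mem_rowSpace : ψ ∈ rowSpace ψ (Nat.zero_add N) := by
  refine Submodule.subset_span ⟨Fin.elim0, funext fun y => ?_⟩
  simp only [Fin.elim0_append]
  rfl

variable {ψ}

lemma comp_cons_mem_rowSpace {h : c + (m + 1) = N} {f : (Fin (m + 1) → Γ) → R}
    (hf : f ∈ rowSpace ψ h) (s : Γ) (h' : c + 1 + m = N) :
    (fun y => f (Fin.cons s y)) ∈ rowSpace ψ h' := by
  let fixFirst := LinearMap.funLeft R R fun y : Fin m → Γ => (Fin.cons s y : Fin (m + 1) → Γ)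
  suffices rowSpace ψ h ≤ (rowSpace ψ h').comap fixFirst from this hf
  refine Submodule.span_le.2 ?_
  rintro _ ⟨x, rfl⟩
  refine Submodule.subset_span ⟨Fin.snoc x s, funext fun y => ?_⟩
  simp only [Fin.append_left_snoc]
  rfl

lemma exists_transfer_matrix {ι κ : Type*} [Fintype κ] {h : c + (m + 1) = N}
    {b : ι → (Fin (m + 1) → Γ) → R} (hb : ∀ i, b i ∈ rowSpace ψ h) (h' : c + 1 + m = N)
    {g : κ → (Fin m → Γ) → R} (hg : rowSpace ψ h' ≤ Submodule.span R (Set.range g)) :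
    ∃ A : Γ → Matrix ι κ R, ∀ s y, (b · (Fin.cons s y)) = A s *ᵥ (g · y) := by
  have h_coeff (s : Γ) (i : ι) : ∃ a : κ → R, ∑ j, a j • g j = fun y => b i (Fin.cons s y) :=
    (Submodule.mem_span_range_iff_exists_fun R).1 (hg (comp_cons_mem_rowSpace (hb i) s h'))
  choose A hA using h_coeff
  refine ⟨fun s => Matrix.of (A s), fun s y => funext fun i => ?_⟩
  simpa [Matrix.mulVec, dotProduct] using (congrFun (hA s i) y).symm

lemma exists_matrices_of_mem_rowSpace {n : ℕ}
    (hn : ∀ {c m : ℕ} (h : c + m = N), (rowSpace ψ h).spanRank ≤ n) (h : c + m = N)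
    {b : Fin n → (Fin m → Γ) → R} (hb : ∀ i, b i ∈ rowSpace ψ h) :
    ∃ (A : Fin m → Γ → Matrix (Fin n) (Fin n) R) (r : Fin n → R),
      ∀ x, (b · x) = (List.ofFn fun k => A k (x k)).prod *ᵥ r := by
  induction m generalizing c with
  | zero => exact ⟨Fin.elim0, (b · Fin.elim0), fun x => by simp [Subsingleton.elim x Fin.elim0]⟩
  | succ m ih =>
    have h' : c + 1 + m = N := by omega
    obtain ⟨g, hg⟩ := exists_fin_span_range_eq_of_spanRank_le (hn h')
    obtain ⟨A₀, hA₀⟩ := exists_transfer_matrix hb h' hg.ge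
    obtain ⟨A, r, hA⟩ := ih h' fun j => hg ▸ Submodule.subset_span (Set.mem_range_self j)
    refine ⟨Fin.cons A₀ A, r, Fin.consCases fun s y => ?_⟩
    calc (b · (Fin.cons s y)) = A₀ s *ᵥ ((List.ofFn fun k => A k (y k)).prod *ᵥ r) := by
          rw [hA₀, hA]
      _ = _ := by simp [List.ofFn_succ, Matrix.mulVec_mulVec]

end RowSpace

theorem exists_mps_of_bond_dim_maximal_schmidt_rank_general {R Γ : Type*} [Semiring R] {N : ℕ}
    (ψ : (Fin N → Γ) → R) {χ : ℕ}
    (hχ : ∀ {c m : ℕ} (h : c + m = N), (rowSpace ψ h).spanRank ≤ χ) :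
    ∃ (A : Fin N → Γ → Matrix (Fin χ) (Fin χ) R) (l r : Fin χ → R),
      ∀ x : Fin N → Γ, ψ x = l ⬝ᵥ ((List.ofFn fun i => A i (x i)).prod).mulVec r := by
  obtain ⟨b, hb⟩ := exists_fin_span_range_eq_of_spanRank_le (hχ (Nat.zero_add N))
  obtain ⟨l, hl⟩ := (Submodule.mem_span_range_iff_exists_fun R).1 (hb ▸ self_mem_rowSpace ψ)
  obtain ⟨A, r, hA⟩ := exists_matrices_of_mem_rowSpace hχ (Nat.zero_add N)
    fun j => hb ▸ Submodule.subset_span (Set.mem_range_self j)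
  refine ⟨A, l, r, fun x => ?_⟩
  calc ψ x = l ⬝ᵥ (b · x) := by simp [← hl, dotProduct]
    _ = _ := by rw [hA]

section SchmidtRank

variable {Γ : Type*} [Fintype Γ] {N : ℕ} (ψ : (Fin N → Γ) → ℂ)

lemma spanRank_rowSpace_eq_rank_reshape {c : ℕ} (hc : c ≤ N) :
    (rowSpace ψ (Nat.add_sub_of_le hc)).spanRank = (reshape N c hc ψ).rank := by
  have h_span : rowSpace ψ (Nat.add_sub_of_le hc) =
      Submodule.span ℂ (Set.range (reshape N c hc ψ).row) := rfl
  rw [h_span, Matrix.rank_eq_finrank_span_row, Module.finrank_eq_rank,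
    Submodule.rank_eq_spanRank_of_free, Submodule.spanRank_top]

lemma spanRank_rowSpace_le_sup_rank_reshape {c m : ℕ} (h : c + m = N) :
    (rowSpace ψ h).spanRank ≤ (Finset.univ.sup fun c : Fin (N + 1) =>
      (reshape N c (by omega : (c : ℕ) ≤ N) ψ).rank : ℕ) := by
  have hc : c ≤ N := by omega
  obtain rfl : m = N - c := by omega
  rw [spanRank_rowSpace_eq_rank_reshape ψ hc, Nat.cast_le]
  exact Finset.le_sup (f := fun c : Fin (N + 1) => (reshape N c (by omega : (c : ℕ) ≤ N) ψ).rank)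
    (Finset.mem_univ ⟨c, by omega⟩)

end SchmidtRank

/-- Every amplitude function `ψ` on words of length `N ≥ 1` admits a matrix product state
representation whose bond dimension `χ` equals its maximal Schmidt rank over all cuts. -/
theorem exists_mps_of_bond_dim_maximal_schmidt_rank {Γ : Type*} [Fintype Γ]
    (N : ℕ) (hN : 1 ≤ N) (ψ : (Fin N → Γ) → ℂ) (χ : ℕ)
    (hχ : χ = Finset.univ.sup fun c : Fin (N + 1) =>
      (reshape N c (by omega : (c : ℕ) ≤ N) ψ).rank)
    (hχ1 : 1 ≤ χ) :
    ∃ (A : Fin N → Γ → Matrix (Fin χ) (Fin χ) ℂ) (l r : Fin χ → ℂ),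
      ∀ x : Fin N → Γ,
        ψ x = l ⬝ᵥ ((List.ofFn fun i => A i (x i)).prod).mulVec r := by
  exact exists_mps_of_bond_dim_maximal_schmidt_rank_general ψ
    fun h => hχ ▸ spanRank_rowSpace_le_sup_rank_reshape ψ h
end
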